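/- If T is L-Lipschitz and monotone on a real Hilbert space H, z, w ∈ H, Δ > 0, and 0 < ρ ≤ 1/(L + Δ), then with x = z - ρ(Tz - w) and y = Tx we have ⟨z - x, y - w⟩ ≥ Δ‖z - x‖². -/

import Mathlib

open RealInnerProductSpace

/-!
Write `y - w = (T z - w) - (T z - T x)` and pair it with the displacement `z - x = ρ • (T z - w)`.
The first term contributes `ρ * ‖T z - w‖ ^ 2`, which is at least `(L + Δ) * ‖z - x‖ ^ 2` because
the step is short; the Lipschitz bound on the second term costs at most `L * ‖z - x‖ ^ 2`.
-/

section

variable {E : Type*} [SeminormedAddCommGroup E] [InnerProductSpace ℝ E]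

theorem real_inner_le_mul_norm_sq_of_norm_le {u v : E} {L : ℝ} (h : ‖v‖ ≤ L * ‖u‖) :
    ⟪u, v⟫ ≤ L * ‖u‖ ^ 2 :=
  calc
    ⟪u, v⟫ ≤ ‖u‖ * ‖v‖ := real_inner_le_norm u v
    _ ≤ ‖u‖ * (L * ‖u‖) := by gcongr
    _ = L * ‖u‖ ^ 2 := by ring

theorem mul_norm_smul_sq_le_real_inner_smul_self {ρ c : ℝ} (hρ : 0 ≤ ρ) (hρc : ρ * c ≤ 1) (g : E) :
    c * ‖ρ • g‖ ^ 2 ≤ ⟪ρ • g, g⟫ :=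
  calc
    c * ‖ρ • g‖ ^ 2 = ρ * c * (ρ * ‖g‖ ^ 2) := by
      rw [norm_smul_of_nonneg hρ]
      ring
    _ ≤ ρ * ‖g‖ ^ 2 := mul_le_of_le_one_left (by positivity) hρc
    _ = ⟪ρ • g, g⟫ := by rw [real_inner_smul_left, real_inner_self_eq_norm_sq]

theorem forward_step_delta_bound_general (T : E → E) (z w : E) (L Δ ρ : ℝ) (hρ : 0 ≤ ρ)
    (hρle : ρ * (L + Δ) ≤ 1) (x y : E) (hx : x = z - ρ • (T z - w)) (hy : y = T x)
    (hT : ⟪z - x, T z - T x⟫ ≤ L * ‖z - x‖ ^ 2) :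
    ⟪z - x, y - w⟫ ≥ Δ * ‖z - x‖ ^ 2 := by
  have displacement : z - x = ρ • (T z - w) := by rw [hx, sub_sub_cancel]
  have short_step : (L + Δ) * ‖z - x‖ ^ 2 ≤ ⟪z - x, T z - w⟫ := by
    rw [displacement]
    exact mul_norm_smul_sq_le_real_inner_smul_self hρ hρle (T z - w)
  calc
    ⟪z - x, y - w⟫ = ⟪z - x, T z - w⟫ - ⟪z - x, T z - T x⟫ := by
      rw [← inner_sub_right, sub_sub_sub_cancel_left, hy]
    _ ≥ (L + Δ) * ‖z - x‖ ^ 2 - L * ‖z - x‖ ^ 2 := sub_le_sub short_step hT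
    _ = Δ * ‖z - x‖ ^ 2 := by ring

end

theorem forward_step_delta_bound {H : Type*} [NormedAddCommGroup H] [InnerProductSpace ℝ H]
    [CompleteSpace H] (T : H → H) (L : ℝ) (hL : 0 ≤ L)
    (hLip : ∀ a b : H, ‖T a - T b‖ ≤ L * ‖a - b‖)
    (hMono : ∀ a b : H, 0 ≤ ⟪a - b, T a - T b⟫)
    (z w : H) (Δ ρ : ℝ) (hΔ : 0 < Δ) (hρ : 0 < ρ) (hρle : ρ ≤ 1 / (L + Δ))
    (x y : H) (hx : x = z - ρ • (T z - w)) (hy : y = T x) :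
    ⟪z - x, y - w⟫ ≥ Δ * ‖z - x‖ ^ 2 :=
  forward_step_delta_bound_general T z w L Δ ρ hρ.le ((le_div_iff₀ (by positivity)).mp hρle) x y
    hx hy (real_inner_le_mul_norm_sq_of_norm_le (hLip z x))
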